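/- Let G^i be a spray with coefficients N^i_j and let F̃ be a Finsler structure on U. If F̃ satisfies the Hamel equation S(∂F̃/∂y^i) − ∂F̃/∂x^i = 0 on Ω for all i (i.e. S is projectively related to F̃), then the following geodesic invariance holds on Ω for all i, j: ∇(∂²F̃/∂y^i∂y^j) = S(∂²F̃/∂y^i∂y^j) − Σ_k (N^k_i ∂²F̃/∂y^k∂y^j + N^k_j ∂²F̃/∂y^i∂y^k) = 0; equivalently, the tensor (1/F̃)(g̃_{ij} − (∂F̃/∂y^i)(∂F̃/∂y^j)) = ∂²F̃/∂y^i∂y^j, built from the angular metric of F̃, is covariant constant with respect to the dynamical covariant derivative. -/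

import Mathlib

noncomputable section

/-- A point `(x, y)` of the tangent space coordinates over `ℝⁿ`. -/
abbrev Pt (n : ℕ) : Type := (Fin n → ℝ) × (Fin n → ℝ)

/-- `Ω = U × (ℝⁿ \ {0})`. -/
def OmegaSet {n : ℕ} (U : Set (Fin n → ℝ)) : Set (Pt n) :=
  {p : Pt n | p.1 ∈ U ∧ p.2 ≠ 0}

/-- Partial derivative `∂f/∂x^i`. -/
def pdx {n : ℕ} (f : Pt n → ℝ) (i : Fin n) (p : Pt n) : ℝ :=
  fderiv ℝ f p (Pi.single i 1, 0)

/-- Partial derivative `∂f/∂y^i`. -/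
def pdy {n : ℕ} (f : Pt n → ℝ) (i : Fin n) (p : Pt n) : ℝ :=
  fderiv ℝ f p (0, Pi.single i 1)

/-- Second fibre derivative `∂²f/∂y^i∂y^j`. -/
def pdyy {n : ℕ} (f : Pt n → ℝ) (i j : Fin n) : Pt n → ℝ :=
  pdy (pdy f j) i

/-- The spray vector field applied to a function:
`S(f) = Σ_k (y^k ∂f/∂x^k − 2 G^k ∂f/∂y^k)`. -/
def Sop {n : ℕ} (G : Fin n → Pt n → ℝ) (f : Pt n → ℝ) (p : Pt n) : ℝ :=
  ∑ k, (p.2 k * pdx f k p - 2 * G k p * pdy f k p)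

/-- Connection coefficients `N^i_j = ∂G^i/∂y^j`. -/
def Ncoef {n : ℕ} (G : Fin n → Pt n → ℝ) (i j : Fin n) : Pt n → ℝ :=
  pdy (G i) j

/-- Horizontal derivative `δf/δx^i = ∂f/∂x^i − Σ_j N^j_i ∂f/∂y^j`. -/
def deltax {n : ℕ} (G : Fin n → Pt n → ℝ) (f : Pt n → ℝ) (i : Fin n) (p : Pt n) : ℝ :=
  pdx f i p - ∑ j, Ncoef G j i p * pdy f j p

/-- Dynamical covariant derivative of a `(0,2)` family:
`∇T_{ij} = S(T_{ij}) − Σ_k (N^k_i T_{kj} + N^k_j T_{ik})`. -/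
def nablaT {n : ℕ} (G : Fin n → Pt n → ℝ) (T : Fin n → Fin n → Pt n → ℝ)
    (i j : Fin n) (p : Pt n) : ℝ :=
  Sop G (T i j) p - ∑ k, (Ncoef G k i p * T k j p + Ncoef G k j p * T i k p)

/-- `f` is positively `k`-homogeneous in the fibre variable `y`, on `Ω`. -/
def PosHomog {n : ℕ} (U : Set (Fin n → ℝ)) (k : ℤ) (f : Pt n → ℝ) : Prop :=
  ∀ L : ℝ, 0 < L → ∀ p ∈ OmegaSet U, f (p.1, L • p.2) = L ^ k * f p

/-- A spray: smooth, positively 2-homogeneous coefficients `G^i`. -/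
def IsSpray {n : ℕ} (U : Set (Fin n → ℝ)) (G : Fin n → Pt n → ℝ) : Prop :=
  ∀ i, ContDiffOn ℝ (⊤ : ℕ∞) (G i) (OmegaSet U) ∧ PosHomog U 2 (G i)

/-- Components of the Euler-Lagrange 1-form: `(δ_S f)_i = S(∂f/∂y^i) − ∂f/∂x^i`. -/
def EL {n : ℕ} (G : Fin n → Pt n → ℝ) (f : Pt n → ℝ) (i : Fin n) (p : Pt n) : ℝ :=
  Sop G (pdy f i) p - pdx f i p

/-- The metric tensor `g_{ij} = ½ ∂²(F²)/∂y^i∂y^j` of a Finsler function. -/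
def metricTensor {n : ℕ} (F : Pt n → ℝ) (i j : Fin n) (p : Pt n) : ℝ :=
  (1 / 2) * pdyy (fun q => F q ^ 2) i j p

/-- A Finsler structure on `U`: smooth, positive, positively 1-homogeneous,
with invertible metric tensor at every point of `Ω`. -/
def IsFinsler {n : ℕ} (U : Set (Fin n → ℝ)) (F : Pt n → ℝ) : Prop :=
  ContDiffOn ℝ (⊤ : ℕ∞) F (OmegaSet U) ∧ (∀ p ∈ OmegaSet U, 0 < F p) ∧ PosHomog U 1 F ∧
    ∀ p ∈ OmegaSet U, IsUnit (Matrix.of (fun i j => metricTensor F i j p))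

theorem isOpen_OmegaSet {n : ℕ} {U : Set (Fin n → ℝ)} (hU : IsOpen U) :
    IsOpen (OmegaSet U) :=
  (hU.preimage continuous_fst).inter
    ((isOpen_compl_singleton (x := (0 : Fin n → ℝ))).preimage continuous_snd)

theorem smooth_dir {n : ℕ} {W : Set (Pt n)} (hW : IsOpen W) {f : Pt n → ℝ}
    (hf : ContDiffOn ℝ (⊤ : ℕ∞) f W) (v : Pt n) :
    ContDiffOn ℝ (⊤ : ℕ∞) (fun q => fderiv ℝ f q v) W :=
  (hf.fderiv_of_isOpen hW (m := (⊤ : ℕ∞)) (by simp)).clm_apply contDiffOn_const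

theorem diffAt_of {n : ℕ} {W : Set (Pt n)} (hW : IsOpen W) {f : Pt n → ℝ}
    (hf : ContDiffOn ℝ (⊤ : ℕ∞) f W) {p : Pt n} (hp : p ∈ W) : DifferentiableAt ℝ f p :=
  (hf.contDiffAt (hW.mem_nhds hp)).differentiableAt (by simp)

theorem dir_comm {n : ℕ} {W : Set (Pt n)} (hW : IsOpen W) {f : Pt n → ℝ}
    (hf : ContDiffOn ℝ (⊤ : ℕ∞) f W) {p : Pt n} (hp : p ∈ W) (v w : Pt n) :
    fderiv ℝ (fun q => fderiv ℝ f q v) p w = fderiv ℝ (fun q => fderiv ℝ f q w) p v := by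
  have hd : DifferentiableAt ℝ (fderiv ℝ f) p :=
    ((hf.fderiv_of_isOpen hW (m := (⊤ : ℕ∞)) (by simp)).contDiffAt
      (hW.mem_nhds hp)).differentiableAt (by simp)
  have hs : IsSymmSndFDerivAt ℝ f p :=
    (hf.contDiffAt (hW.mem_nhds hp)).isSymmSndFDerivAt (by
      simp only [minSmoothness_of_isRCLikeNormedField]
      exact WithTop.coe_le_coe.2 (le_top (a := (2 : ℕ∞))))
  rw [fderiv_clm_apply hd (differentiableAt_const v),
    fderiv_clm_apply hd (differentiableAt_const w)]
  simpa using hs w v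

theorem pdy_Sop {n : ℕ} {W : Set (Pt n)} (hW : IsOpen W) {G : Fin n → Pt n → ℝ}
    (hG : ∀ i, ContDiffOn ℝ (⊤ : ℕ∞) (G i) W) {f : Pt n → ℝ}
    (hf : ContDiffOn ℝ (⊤ : ℕ∞) f W) {p : Pt n} (hp : p ∈ W) (i : Fin n) :
    pdy (Sop G f) i p
      = Sop G (pdy f i) p + pdx f i p - 2 * ∑ k, Ncoef G k i p * pdy f k p := by
  have hy : ∀ k : Fin n, HasFDerivAt (fun q : Pt n => q.2 k)
      ((ContinuousLinearMap.proj k).comp (ContinuousLinearMap.snd ℝ (Fin n → ℝ) (Fin n → ℝ))) p :=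
    fun k => ((ContinuousLinearMap.proj (R := ℝ) (φ := fun _ : Fin n => ℝ) k).comp
      (ContinuousLinearMap.snd ℝ (Fin n → ℝ) (Fin n → ℝ))).hasFDerivAt
  have hx : ∀ k, DifferentiableAt ℝ (pdx f k) p := fun k =>
    diffAt_of hW (smooth_dir hW hf _) hp
  have hv : ∀ k, DifferentiableAt ℝ (pdy f k) p := fun k =>
    diffAt_of hW (smooth_dir hW hf _) hp
  have hg : ∀ k, DifferentiableAt ℝ (G k) p := fun k => diffAt_of hW (hG k) hp
  have H := HasFDerivAt.fun_sum (u := Finset.univ) fun k _ =>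
    ((hy k).fun_mul (hx k).hasFDerivAt).fun_sub
      ((((hg k).hasFDerivAt).const_mul (2 : ℝ)).fun_mul (hv k).hasFDerivAt)
  have c1 : ∀ k, fderiv ℝ (pdx f k) p (0, Pi.single i 1) = pdx (pdy f i) k p := fun k =>
    dir_comm hW hf hp _ _
  have c2 : ∀ k, fderiv ℝ (pdy f k) p (0, Pi.single i 1) = pdy (pdy f i) k p := fun k =>
    dir_comm hW hf hp _ _
  have c3 : ∀ k, fderiv ℝ (G k) p (0, Pi.single i 1) = Ncoef G k i p := fun k => rfl
  have e : pdy (Sop G f) i p = _ :=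
    congrArg (fun L : Pt n →L[ℝ] ℝ => L (0, Pi.single i 1)) H.fderiv
  rw [e]
  have c4 : pdx f i p = ∑ k, pdx f k p * (Pi.single i (1 : ℝ) : Fin n → ℝ) k := by
    simp [Pi.single_apply]
  rw [c4, Sop, Finset.mul_sum, ← Finset.sum_add_distrib, ← Finset.sum_sub_distrib]
  simp only [ContinuousLinearMap.sum_apply]
  refine Finset.sum_congr rfl fun k _ => ?_
  simp [c1, c2, c3]
  ring

theorem star {n : ℕ} {W : Set (Pt n)} (hW : IsOpen W) {G : Fin n → Pt n → ℝ}
    (hG : ∀ i, ContDiffOn ℝ (⊤ : ℕ∞) (G i) W) {f : Pt n → ℝ}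
    (hf : ContDiffOn ℝ (⊤ : ℕ∞) f W) (hE : ∀ i, ∀ p ∈ W, EL G f i p = 0)
    {p : Pt n} (hp : p ∈ W) (i j : Fin n) :
    Sop G (pdyy f i j) p + pdx (pdy f j) i p
      - 2 * ∑ k, Ncoef G k i p * pdyy f k j p = pdx (pdy f i) j p := by
  have h1 : Sop G (pdy f j) =ᶠ[nhds p] pdx f j := by
    filter_upwards [hW.mem_nhds hp] with q hq
    have := hE j q hq
    unfold EL at this
    linarith
  have h2 : pdy (Sop G (pdy f j)) i p = pdy (pdx f j) i p := by
    unfold pdy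
    exact congrArg (fun L : Pt n →L[ℝ] ℝ => L (0, Pi.single i 1)) h1.fderiv_eq
  have h3 : pdy (pdx f j) i p = pdx (pdy f i) j p := dir_comm hW hf hp _ _
  rw [← h3, ← h2, pdy_Sop hW hG (f := pdy f j) (smooth_dir hW hf _) hp]
  rfl

theorem Sop_congr {n : ℕ} {W : Set (Pt n)} (hW : IsOpen W) (G : Fin n → Pt n → ℝ)
    {f g : Pt n → ℝ} (h : ∀ q ∈ W, f q = g q) {p : Pt n} (hp : p ∈ W) :
    Sop G f p = Sop G g p := by
  have h1 : f =ᶠ[nhds p] g := by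
    filter_upwards [hW.mem_nhds hp] with q hq using h q hq
  unfold Sop pdx pdy
  rw [h1.fderiv_eq]

theorem angular {n : ℕ} {W : Set (Pt n)} (hW : IsOpen W) {f : Pt n → ℝ}
    (hf : ContDiffOn ℝ (⊤ : ℕ∞) f W) {p : Pt n} (hp : p ∈ W) (h0 : f p ≠ 0) (i j : Fin n) :
    (1 / f p) * (metricTensor f i j p - pdy f i p * pdy f j p) = pdyy f i j p := by
  have h1 : pdy (fun q => f q ^ 2) j =ᶠ[nhds p] fun q => 2 * (f q * pdy f j q) := by
    filter_upwards [hW.mem_nhds hp] with q hq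
    have := ((diffAt_of hW hf hq).hasFDerivAt.pow 2).fderiv
    unfold pdy
    rw [this]
    simp
    ring
  have hv : DifferentiableAt ℝ (pdy f j) p := diffAt_of hW (smooth_dir hW hf _) hp
  have h2 : pdyy (fun q => f q ^ 2) i j p
      = 2 * (f p * pdyy f i j p + pdy f j p * pdy f i p) := by
    have := (((diffAt_of hW hf hp).hasFDerivAt.fun_mul hv.hasFDerivAt).const_mul (2 : ℝ)).fderiv
    have e := congrArg (fun L : Pt n →L[ℝ] ℝ => L (0, Pi.single i 1)) (h1.fderiv_eq.trans this)
    refine Eq.trans e ?_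
    simp [pdyy, pdy]
    ring
  rw [metricTensor, h2]
  field_simp
  ring

/-- Theorem 2 ii): if the Hamel equations `δ_S F̃ = 0` hold, then
`∇(∂²F̃/∂y^i∂y^j) = 0`, i.e. the angular-metric tensor `(1/F̃) h̃_{ij}
= (1/F̃)(g̃_{ij} − ∂F̃/∂y^i ∂F̃/∂y^j) = ∂²F̃/∂y^i∂y^j` is covariant constant. -/
theorem statement8 {n : ℕ} (hn : 1 ≤ n) (U : Set (Fin n → ℝ)) (hU : IsOpen U)
    (G : Fin n → Pt n → ℝ) (hG : IsSpray U G)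
    (Ft : Pt n → ℝ) (hFt : IsFinsler U Ft)
    (hHamel : ∀ i, ∀ p ∈ OmegaSet U, EL G Ft i p = 0) :
    (∀ i j, ∀ p ∈ OmegaSet U, nablaT G (pdyy Ft) i j p = 0) ∧
      (∀ i j, ∀ p ∈ OmegaSet U,
        nablaT G
          (fun i j q =>
            (1 / Ft q) * (metricTensor Ft i j q - pdy Ft i q * pdy Ft j q)) i j p = 0) := by
  have hW := isOpen_OmegaSet hU
  have hf := hFt.1
  have hGs : ∀ i, ContDiffOn ℝ (⊤ : ℕ∞) (G i) (OmegaSet U) := fun i => (hG i).1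
  have symm : ∀ i j, ∀ p ∈ OmegaSet U, pdyy Ft i j p = pdyy Ft j i p := fun i j p hp =>
    dir_comm hW hf hp _ _
  have A : ∀ i j, ∀ p ∈ OmegaSet U, nablaT G (pdyy Ft) i j p = 0 := by
    intro i j p hp
    have s1 := star hW hGs hf hHamel hp i j
    have s2 := star hW hGs hf hHamel hp j i
    rw [Sop_congr hW G (symm j i) hp] at s2
    have e : ∑ k, Ncoef G k j p * pdyy Ft i k p = ∑ k, Ncoef G k j p * pdyy Ft k i p :=
      Finset.sum_congr rfl fun k _ => by rw [symm i k p hp]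
    rw [nablaT, Finset.sum_add_distrib, e]
    linarith
  refine ⟨A, fun i j p hp => ?_⟩
  have B : ∀ i j, ∀ q ∈ OmegaSet U,
      (1 / Ft q) * (metricTensor Ft i j q - pdy Ft i q * pdy Ft j q) = pdyy Ft i j q :=
    fun i j q hq => angular hW hf hq (hFt.2.1 q hq).ne' i j
  rw [← A i j p hp]
  unfold nablaT
  rw [Sop_congr hW G (B i j) hp]
  simp only [B _ _ p hp]
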